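/- Let d ≥ 1, R₀ > 0, σ ∈ ℝ, and let c ∈ ℂ satisfy c² = σ. Let Ψ : ℝ^d → ℂ be smooth on the open ball B(0, 2R₀) and satisfy ΔΨ = σΨ there, where Δ = Σ_{j=1}^d ∂²/∂y_j² is the Euclidean Laplacian. Let β : B(0, 2R₀) → [0, ∞) be a bounded measurable rotationally invariant function (β(Ry) = β(y) for every orthogonal transformation R and every y). Then for all 0 < R < R₀, ∫_{|Y| ≤ 2R} Ψ(Y) β(Y) dY = Ψ(0) ∫_{|Y| ≤ 2R} e^{c Y₁} β(Y) dY, where Y = (Y₁, …, Y_d). -/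

import Mathlib

open MeasureTheory Metric

/-- The Euclidean Laplacian `Δ Ψ = Σ_j ∂²Ψ/∂y_j²` of a function on `ℝ^d`. -/
noncomputable def lap {d : ℕ} (Ψ : EuclideanSpace ℝ (Fin d) → ℂ)
    (x : EuclideanSpace ℝ (Fin d)) : ℂ :=
  ∑ j : Fin d,
    fderiv ℝ (fun y => fderiv ℝ Ψ y (EuclideanSpace.single j 1)) x (EuclideanSpace.single j 1)

/-!
Subtracting the plane wave `Ψ 0 * exp (c * Y₁)`, which has the same eigenvalue, reduces the claim
to: an eigenfunction `v` with `v 0 = 0` integrates to zero against every radial weight. For a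
continuous `φ` vanishing on `[S, ∞)` put `A_φ(t) = ∫ φ(‖y‖²) v(ty) dy`. The vector field
`φ(‖y‖²) y` is minus the gradient of `(Wφ)(‖y‖²)`, where `Wφ(s) = ½ ∫_s^S φ`, so integration by
parts gives `A_φ' = σ t A_{Wφ}`, with `A_φ(0) = 0`. Iterating, and using `|Wφ| ≤ (S/2) sup |φ|`,
`|A_φ(t)|` is at most a constant times `(|σ| S t / 2) ^ n / n!` for every `n`, for `0 ≤ t ≤ 1`;
hence `A_φ(1) = 0`. Measurable radial weights follow by density in `L¹`.
-/

section NormSq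

open InnerProductSpace

variable {E : Type*} [NormedAddCommGroup E]

lemma lt_norm_sq_of_notMem_closedBall_sqrt {S : ℝ} {y : E} (hy : y ∉ closedBall (0 : E) √S) :
    S < ‖y‖ ^ 2 := by
  rw [mem_closedBall_zero_iff, not_le] at hy
  exact Real.lt_sq_of_sqrt_lt hy

lemma hasCompactSupport_comp_norm_sq [ProperSpace E] {F : Type*} [Zero F] {φ : ℝ → F} {S : ℝ}
    (hφ : ∀ s, S ≤ s → φ s = 0) : HasCompactSupport fun y : E => φ (‖y‖ ^ 2) :=
  HasCompactSupport.intro (isCompact_closedBall (0 : E) √S) fun _ hy =>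
    hφ _ (lt_norm_sq_of_notMem_closedBall_sqrt hy).le

variable [InnerProductSpace ℝ E]

lemma hasGradientAt_comp_norm_sq [CompleteSpace E] {w : ℝ → ℝ} {w' : ℝ} {y : E}
    (hw : HasDerivAt w w' (‖y‖ ^ 2)) :
    HasGradientAt (fun z : E => w (‖z‖ ^ 2)) ((2 * w') • y) y := by
  rw [hasGradientAt_iff_hasFDerivAt]
  refine (hw.comp_hasFDerivAt y (hasStrictFDerivAt_norm_sq y).hasFDerivAt).congr_fderiv ?_
  ext h
  simp only [_root_.smul_apply, coe_innerSL_apply, nsmul_eq_mul, Nat.cast_ofNat, smul_eq_mul,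
    map_smul, toDual_apply_apply]
  ring

lemma exists_measurable_eq_comp_norm_sq [Nontrivial E] [MeasurableSpace E] [BorelSpace E]
    {α : Type*} [MeasurableSpace α] {r : ℝ} {β : E → α} (hβ : Measurable β)
    (hrot : ∀ U : E ≃ₗᵢ[ℝ] E, ∀ y ∈ closedBall 0 r, β (U y) = β y) :
    ∃ b : ℝ → α, Measurable b ∧ ∀ y ∈ closedBall (0 : E) r, β y = b (‖y‖ ^ 2) := by
  obtain ⟨e, he⟩ := exists_norm_eq E zero_le_one
  refine ⟨fun s => β (√s • e), by fun_prop, fun y hy => ?_⟩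
  have hnorm : ‖y‖ = ‖√(‖y‖ ^ 2) • e‖ := by simp [norm_smul, he]
  calc β y = β ((ℝ ∙ (y - √(‖y‖ ^ 2) • e))ᗮ.reflection y) := (hrot _ y hy).symm
    _ = β (√(‖y‖ ^ 2) • e) := by rw [Submodule.reflection_sub hnorm]

end NormSq

section Laplacian

open Set InnerProductSpace Laplacian

section

variable {E F : Type*} [NormedAddCommGroup E] [NormedSpace ℝ E] [NormedAddCommGroup F]
  [NormedSpace ℝ F]

lemma iteratedFDeriv_two_apply_eq_fderiv_fderiv_apply {f : E → F} {x : E}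
    (hf : ContDiffAt ℝ 2 f x) (h : E) :
    iteratedFDeriv ℝ 2 f x ![h, h] = fderiv ℝ (fun y => fderiv ℝ f y h) x h := by
  have hf' : DifferentiableAt ℝ (fderiv ℝ f) x :=
    (hf.fderiv_right (m := 1) (by norm_num)).differentiableAt one_ne_zero
  rw [iteratedFDeriv_two_apply, fderiv_clm_apply hf' (by fun_prop)]
  simp

lemma exists_contDiff_eqOn_ball [HasContDiffBump E] {n : ℕ∞} {v : E → F} {r T : ℝ}
    (hrT : r < T) (hv : ContDiffOn ℝ n v (ball 0 T)) :
    ∃ V : E → F, ContDiff ℝ n V ∧ EqOn V v (ball 0 r) := by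
  rcases le_or_gt r 0 with hr | hr
  · exact ⟨0, contDiff_const, by simp [ball_eq_empty.2 hr]⟩
  let χ : ContDiffBump (0 : E) := ⟨r, (r + T) / 2, hr, by linarith⟩
  have hχT : tsupport χ ⊆ ball 0 T := by
    rw [χ.tsupport_eq]
    exact closedBall_subset_ball (show (r + T) / 2 < T by linarith)
  refine ⟨fun y => χ y • v y, contDiff_iff_contDiffAt.2 fun y => ?_, fun y hy => ?_⟩
  · by_cases hy : y ∈ tsupport χ
    · exact χ.contDiff.contDiffAt.smul (hv.contDiffAt (isOpen_ball.mem_nhds (hχT hy)))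
    · refine (contDiffAt_const (c := (0 : F))).congr_of_eventuallyEq ?_
      filter_upwards [notMem_tsupport_iff_eventuallyEq.1 hy] with z hz
      simp [hz]
  · simp [χ.one_of_mem_closedBall (ball_subset_closedBall hy)]

end

lemma lap_eq_laplacian {d : ℕ} {Ψ : EuclideanSpace ℝ (Fin d) → ℂ} {x : EuclideanSpace ℝ (Fin d)}
    (hΨ : ContDiffAt ℝ 2 Ψ x) : lap Ψ x = (Δ Ψ) x := by
  rw [laplacian_eq_iteratedFDeriv_orthonormalBasis Ψ (EuclideanSpace.basisFun (Fin d) ℝ), lap]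
  simp only [EuclideanSpace.basisFun_apply, iteratedFDeriv_two_apply_eq_fderiv_fderiv_apply hΨ]

variable {E : Type*} [NormedAddCommGroup E] [InnerProductSpace ℝ E]

/-- The exponential plane wave `y ↦ exp (c ⟪e, y⟫)` in the direction `e`. The exponent is complex,
so that eigenvalues `c² ‖e‖²` of either sign occur. -/
noncomputable def planeWave (c : ℂ) (e y : E) : ℂ := Complex.exp (c * ⟪e, y⟫_ℝ)

lemma contDiff_planeWave {n : WithTop ℕ∞} (c : ℂ) (e : E) : ContDiff ℝ n (planeWave c e) := by
  unfold planeWave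
  have : ContDiff ℝ n fun y : E => ((⟪e, y⟫_ℝ : ℝ) : ℂ) :=
    Complex.ofRealCLM.contDiff.comp (contDiff_const.inner ℝ contDiff_id)
  exact (contDiff_const.mul this).cexp

lemma fderiv_planeWave_apply (c : ℂ) (e y h : E) :
    fderiv ℝ (planeWave c e) y h = (c * ⟪e, h⟫_ℝ) * planeWave c e y := by
  have h1 : HasFDerivAt (fun z : E => c * ((⟪e, z⟫_ℝ : ℝ) : ℂ))
      (c • Complex.ofRealCLM.comp (innerSL ℝ e)) y :=
    (Complex.ofRealCLM.comp (innerSL ℝ e)).hasFDerivAt.const_mul c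
  rw [show fderiv ℝ (planeWave c e) y = _ from h1.cexp.fderiv]
  simp only [_root_.smul_apply, ContinuousLinearMap.comp_apply, coe_innerSL_apply,
    Complex.ofRealCLM_apply, smul_eq_mul, planeWave]
  ring

lemma laplacian_planeWave [FiniteDimensional ℝ E] (c : ℂ) (e : E) :
    Δ (planeWave c e) = (c ^ 2 * ‖e‖ ^ 2) • planeWave c e := by
  ext y
  have second (h : E) : iteratedFDeriv ℝ 2 (planeWave c e) y ![h, h] =
      c ^ 2 * (⟪e, h⟫_ℝ ^ 2 : ℝ) * planeWave c e y := by
    rw [iteratedFDeriv_two_apply_eq_fderiv_fderiv_apply (contDiff_planeWave c e).contDiffAt]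
    simp only [fderiv_planeWave_apply]
    rw [fderiv_const_mul ((contDiff_planeWave c e).differentiable one_ne_zero y),
      _root_.smul_apply, fderiv_planeWave_apply, smul_eq_mul]
    push_cast
    ring
  rw [laplacian_eq_iteratedFDeriv_stdOrthonormalBasis]
  simp only [second, ← Finset.sum_mul, ← Finset.mul_sum]
  rw [← Complex.ofReal_sum, OrthonormalBasis.sum_sq_inner_left, Complex.ofReal_pow,
    Pi.smul_apply, smul_eq_mul]

end Laplacian

section IntegrationByParts

open InnerProductSpace Gradient Laplacian

variable {E : Type*} [NormedAddCommGroup E] [InnerProductSpace ℝ E] [FiniteDimensional ℝ E]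
  [MeasurableSpace E] [BorelSpace E] {F : Type*} [NormedAddCommGroup F] [NormedSpace ℝ F]

lemma integral_apply_gradient {ι : Type*} [Fintype ι] (b : OrthonormalBasis ι ℝ E)
    {w : E → ℝ} (hw : ContDiff ℝ 1 w) (hwc : HasCompactSupport w)
    {X : E → E →L[ℝ] F} (hX : ContDiff ℝ 1 X) :
    ∫ y, X y (∇ w y) = -∫ y, w y • ∑ i, fderiv ℝ X y (b i) (b i) := by
  have : Continuous (fderiv ℝ w) := hw.continuous_fderiv one_ne_zero
  have : Continuous (fderiv ℝ X) := hX.continuous_fderiv one_ne_zero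
  have : Continuous w := hw.continuous
  have : Continuous X := hX.continuous
  have fderiv_apply (i) (y : E) :
      fderiv ℝ (fun z => X z (b i)) y (b i) = fderiv ℝ X y (b i) (b i) := by
    rw [fderiv_clm_apply (hX.differentiable one_ne_zero y) (by fun_prop)]
    simp
  have integrable_left (i) : Integrable fun y => fderiv ℝ w y (b i) • X y (b i) :=
    Continuous.integrable_of_hasCompactSupport (by fun_prop) ((hwc.fderiv_apply ℝ _).smul_right)
  have integrable_right (i) : Integrable fun y => w y • fderiv ℝ X y (b i) (b i) :=
    Continuous.integrable_of_hasCompactSupport (by fun_prop) hwc.smul_right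
  have by_parts (i) : ∫ y, fderiv ℝ w y (b i) • X y (b i) =
      -∫ y, w y • fderiv ℝ X y (b i) (b i) := by
    simp only [← fderiv_apply] at integrable_right ⊢
    rw [integral_smul_fderiv_eq_neg_fderiv_smul_of_integrable (integrable_left i)
      (integrable_right i) (Continuous.integrable_of_hasCompactSupport (by fun_prop) hwc.smul_right)
      (fun y _ => hw.differentiable one_ne_zero y)
      fun y _ => (hX.clm_apply contDiff_const).differentiable one_ne_zero y, neg_neg]
  have expand (y : E) : X y (∇ w y) = ∑ i, fderiv ℝ w y (b i) • X y (b i) := by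
    conv_lhs => rw [← b.sum_repr' (∇ w y), map_sum]
    simp only [map_smul, real_inner_comm (∇ w y), inner_gradient_left]
  simp only [expand, Finset.smul_sum, integral_finsetSum _ fun i _ => integrable_left i,
    integral_finsetSum _ fun i _ => integrable_right i, by_parts, Finset.sum_neg_distrib]

lemma integral_fderiv_comp_smul_gradient {w : E → ℝ} (hw : ContDiff ℝ 1 w)
    (hwc : HasCompactSupport w) {v : E → F} (hv : ContDiff ℝ 2 v) (t : ℝ) :
    ∫ y, fderiv ℝ v (t • y) (∇ w y) = -(t • ∫ y, w y • (Δ v) (t • y)) := by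
  have hX : ContDiff ℝ 1 fun y => fderiv ℝ v (t • y) :=
    (hv.fderiv_right (by norm_num)).comp (contDiff_const_smul t)
  have hX' (y : E) : fderiv ℝ (fun z => fderiv ℝ v (t • z)) y =
      t • fderiv ℝ (fderiv ℝ v) (t • y) := fderiv_comp_smul t
  rw [integral_apply_gradient (stdOrthonormalBasis ℝ E) hw hwc hX]
  simp only [hX', laplacian_eq_iteratedFDeriv_stdOrthonormalBasis, iteratedFDeriv_two_apply,
    _root_.smul_apply, ← Finset.smul_sum, smul_comm _ t, integral_smul,
    Matrix.cons_val_zero, Matrix.cons_val_one]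

end IntegrationByParts

lemma hasDerivAt_integral_smul_comp_smul {E F : Type*} [NormedAddCommGroup E] [NormedSpace ℝ E]
    [MeasurableSpace E] [BorelSpace E] {μ : Measure E} [IsFiniteMeasureOnCompacts μ]
    [NormedAddCommGroup F] [NormedSpace ℝ F] {w : E → ℝ} (hw : Continuous w)
    (hwc : HasCompactSupport w) {v : E → F} (hv : ContDiff ℝ 1 v) (t : ℝ) :
    HasDerivAt (fun t : ℝ => ∫ y, w y • v (t • y) ∂μ)
      (∫ y, w y • fderiv ℝ v (t • y) y ∂μ) t := by
  have : Continuous (fderiv ℝ v) := hv.continuous_fderiv one_ne_zero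
  have : Continuous v := hv.continuous
  have hcompact := (isCompact_Icc (a := t - 1) (b := t + 1)).prod hwc.isCompact
  obtain ⟨C, hC⟩ := hcompact.exists_bound_of_continuousOn
    (f := fun p : ℝ × E => fderiv ℝ v (p.1 • p.2) p.2) (by fun_prop)
  have integrable {f : E → F} (hf : Continuous f) : Integrable (fun y => w y • f y) μ :=
    (hw.smul hf).integrable_of_hasCompactSupport hwc.smul_right
  refine (hasDerivAt_integral_of_dominated_loc_of_deriv_le (F := fun u y => w y • v (u • y))
    (F' := fun u y => w y • fderiv ℝ v (u • y) y) (bound := fun y => ‖w y‖ * C)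
    (Icc_mem_nhds (sub_one_lt t) (lt_add_one t)) (.of_forall fun u => ?_) ?_ ?_
    (.of_forall fun y u hu => ?_) ?_ (.of_forall fun y u _ => ?_)).2
  · exact (integrable (by fun_prop)).aestronglyMeasurable
  · exact integrable (by fun_prop)
  · exact (integrable (by fun_prop)).aestronglyMeasurable
  · rw [norm_smul]
    by_cases hy : y ∈ tsupport w
    · gcongr
      exact hC (u, y) ⟨hu, hy⟩
    · simp [image_eq_zero_of_notMem_tsupport hy]
  · exact Continuous.integrable_of_hasCompactSupport (by fun_prop) hwc.norm.mul_right
  · have := (hv.differentiable one_ne_zero (u • y)).hasFDerivAt.comp_hasDerivAt u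
      ((hasDerivAt_id u).smul_const y)
    simpa using! this.const_smul (w y)

section HalfTailIntegral

open Set

/-- Half the integral of `φ` over `[s, S]`. If `φ` vanishes beyond `S`, the weight
`halfTailIntegral S φ (‖·‖²)` is a potential: its gradient at `y` is `-φ (‖y‖²) y`. -/
noncomputable def halfTailIntegral (S : ℝ) (φ : ℝ → ℝ) (s : ℝ) : ℝ :=
  2⁻¹ * ∫ u in s..S, φ u

lemma hasDerivAt_halfTailIntegral (S : ℝ) {φ : ℝ → ℝ} (hφ : Continuous φ) (s : ℝ) :
    HasDerivAt (halfTailIntegral S φ) (2⁻¹ * -φ s) s :=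
  (intervalIntegral.integral_hasDerivAt_left (hφ.intervalIntegrable _ _)
    hφ.stronglyMeasurable.stronglyMeasurableAtFilter hφ.continuousAt).const_mul _

lemma contDiff_halfTailIntegral (S : ℝ) {φ : ℝ → ℝ} (hφ : Continuous φ) :
    ContDiff ℝ 1 (halfTailIntegral S φ) := by
  have hderiv := hasDerivAt_halfTailIntegral S hφ
  rw [contDiff_one_iff_deriv, deriv_eq hderiv]
  exact ⟨fun s => (hderiv s).differentiableAt, by fun_prop⟩

lemma halfTailIntegral_eq_zero {S : ℝ} {φ : ℝ → ℝ} (hφ : ∀ s, S ≤ s → φ s = 0) {s : ℝ}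
    (hs : S ≤ s) : halfTailIntegral S φ s = 0 := by
  rw [halfTailIntegral, intervalIntegral.integral_symm,
    intervalIntegral.integral_congr (g := 0) fun u hu => hφ u (uIcc_of_le hs ▸ hu).1]
  simp

lemma abs_halfTailIntegral_le {S K : ℝ} {φ : ℝ → ℝ} (hφ : ∀ s ∈ Icc 0 S, |φ s| ≤ K) {s : ℝ}
    (hs : s ∈ Icc 0 S) : |halfTailIntegral S φ s| ≤ S / 2 * K := by
  have hK : 0 ≤ K := (abs_nonneg _).trans (hφ s hs)
  have hφ' (u) (hu : u ∈ uIoc s S) : ‖φ u‖ ≤ K := by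
    rw [uIoc_of_le hs.2] at hu
    exact hφ u ⟨hs.1.trans hu.1.le, hu.2⟩
  have : |∫ u in s..S, φ u| ≤ K * |S - s| :=
    intervalIntegral.norm_integral_le_of_norm_le_const hφ'
  rw [abs_of_nonneg (sub_nonneg.2 hs.2)] at this
  rw [halfTailIntegral, abs_mul, abs_of_pos (inv_pos.2 two_pos)]
  nlinarith [hs.1]

end HalfTailIntegral

section RadialDensity

open Set

lemma exists_continuous_integral_abs_sub_le {μ : Measure ℝ} [IsFiniteMeasure μ] {b : ℝ → ℝ}
    (hb : Integrable b μ) {q S : ℝ} (hqS : q < S) (hbq : ∀ s, q < s → b s = 0) {ε : ℝ}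
    (hε : 0 < ε) :
    ∃ φ : ℝ → ℝ, Continuous φ ∧ (∀ s, S ≤ s → φ s = 0) ∧
      ∫ s, |b s - φ s| ∂μ ≤ ε := by
  obtain ⟨g, -, hbg, hg, hgint⟩ := hb.exists_hasCompactSupport_integral_sub_le hε
  obtain ⟨χ, hχS, hχq, hχ01⟩ := exists_continuous_zero_one_of_isClosed (isClosed_Ici (a := S))
    (isClosed_Iic (a := q)) ((Iic_disjoint_Ici.2 hqS.not_ge).symm)
  have hχg (s) : |b s - χ s * g s| ≤ |b s - g s| := by
    have : b s = χ s * b s := by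
      rcases le_or_gt s q with hs | hs
      · simp [hχq hs]
      · simp [hbq s hs]
    calc |b s - χ s * g s| = χ s * |b s - g s| := by
          rw [this, ← mul_sub, abs_mul, abs_of_nonneg (hχ01 s).1, ← this]
      _ ≤ |b s - g s| := mul_le_of_le_one_left (abs_nonneg _) (hχ01 s).2
  have hint : Integrable (fun s => χ s * g s) μ :=
    hgint.bdd_mul (c := 1) χ.continuous.aestronglyMeasurable
      (.of_forall fun s => abs_le.2 ⟨by linarith [(hχ01 s).1], (hχ01 s).2⟩)
  refine ⟨fun s => χ s * g s, by fun_prop, fun s hs => by simp [hχS hs], ?_⟩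
  exact (integral_mono (hb.sub hint).abs (hb.sub hgint).abs hχg).trans hbg

lemma exists_continuous_integral_comp_norm_sq_sub_le {E : Type*} [NormedAddCommGroup E]
    [ProperSpace E] [MeasurableSpace E] [BorelSpace E] {μ : Measure E}
    [IsFiniteMeasureOnCompacts μ] {b : ℝ → ℝ} (hb : Measurable b)
    (hbint : Integrable (fun y => b (‖y‖ ^ 2)) μ) {q S : ℝ} (hqS : q < S)
    (hbq : ∀ s, q < s → b s = 0) {ε : ℝ} (hε : 0 < ε) :
    ∃ φ : ℝ → ℝ, Continuous φ ∧ (∀ s, S ≤ s → φ s = 0) ∧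
      ∫ y, |b (‖y‖ ^ 2) - φ (‖y‖ ^ 2)| ∂μ ≤ ε := by
  have hsq : Measurable fun y : E => ‖y‖ ^ 2 := by fun_prop
  set ν := μ.restrict (closedBall (0 : E) √S)
  have : IsFiniteMeasure ν := isFiniteMeasure_restrict.2 measure_closedBall_lt_top.ne
  have hbν : Integrable b (ν.map fun y => ‖y‖ ^ 2) :=
    (integrable_map_measure hb.aestronglyMeasurable hsq.aemeasurable).2 hbint.restrict
  obtain ⟨φ, hφ, hφS, hφε⟩ := exists_continuous_integral_abs_sub_le hbν hqS hbq hε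
  have hzero (y) (hy : y ∉ closedBall (0 : E) √S) : |b (‖y‖ ^ 2) - φ (‖y‖ ^ 2)| = 0 := by
    have := lt_norm_sq_of_notMem_closedBall_sqrt hy
    rw [hφS _ this.le, hbq _ (hqS.trans this), sub_zero, abs_zero]
  refine ⟨φ, hφ, hφS, ?_⟩
  rwa [integral_map hsq.aemeasurable (by fun_prop),
    setIntegral_eq_integral_of_forall_compl_eq_zero hzero] at hφε

end RadialDensity

section Eigenfunction

open Filter Topology Set InnerProductSpace Gradient Laplacian

variable {E : Type*} [NormedAddCommGroup E] [InnerProductSpace ℝ E] [FiniteDimensional ℝ E]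
  [MeasurableSpace E] [BorelSpace E]

section

variable {F : Type*} [NormedAddCommGroup F] [NormedSpace ℝ F]

/-- The integral of the dilate `v (t ·)` against the weight `φ (‖·‖²)`; weights are functions of
the squared norm so that they are as smooth as `φ`. -/
noncomputable def dilatedIntegral (φ : ℝ → ℝ) (v : E → F) (t : ℝ) : F :=
  ∫ y, φ (‖y‖ ^ 2) • v (t • y)

variable {𝕜 : Type*} [NormedField 𝕜] [NormedSpace 𝕜 F] [SMulCommClass ℝ 𝕜 F]
  {S : ℝ} {σ : 𝕜} {v : E → F} {φ : ℝ → ℝ}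

lemma hasDerivAt_dilatedIntegral (hφ : Continuous φ) (hφS : ∀ s, S ≤ s → φ s = 0)
    (hv : ContDiff ℝ 2 v) (hΔ : ∀ x, ‖x‖ ^ 2 ≤ S → (Δ v) x = σ • v x) {t : ℝ} (ht : |t| ≤ 1) :
    HasDerivAt (dilatedIntegral φ v) (t • σ • dilatedIntegral (halfTailIntegral S φ) v t) t := by
  have hgradient (y : E) :
      ∇ (fun z : E => halfTailIntegral S φ (‖z‖ ^ 2)) y = -(φ (‖y‖ ^ 2) • y) := by
    rw [(hasGradientAt_comp_norm_sq (hasDerivAt_halfTailIntegral S hφ _)).gradient,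
      mul_inv_cancel_left₀ two_ne_zero, neg_smul]
  have heigen (y : E) : halfTailIntegral S φ (‖y‖ ^ 2) • (Δ v) (t • y) =
      σ • halfTailIntegral S φ (‖y‖ ^ 2) • v (t • y) := by
    rcases le_total S (‖y‖ ^ 2) with hy | hy
    · simp [halfTailIntegral_eq_zero hφS hy]
    · have : ‖t • y‖ ≤ ‖y‖ := by
        rw [norm_smul]
        exact mul_le_of_le_one_left (norm_nonneg y) ht
      rw [hΔ _ ((pow_le_pow_left₀ (norm_nonneg _) this 2).trans hy), smul_comm]
  have key := integral_fderiv_comp_smul_gradient (w := fun z => halfTailIntegral S φ (‖z‖ ^ 2))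
    ((contDiff_halfTailIntegral S hφ).comp (contDiff_norm_sq ℝ))
    (hasCompactSupport_comp_norm_sq fun _ => halfTailIntegral_eq_zero hφS) hv t
  simp only [hgradient, heigen, map_neg, map_smul, integral_neg, neg_inj, integral_smul] at key
  rw [dilatedIntegral, ← key]
  exact hasDerivAt_integral_smul_comp_smul (hφ.comp (by fun_prop))
    (hasCompactSupport_comp_norm_sq hφS) (hv.of_le one_le_two) t

lemma exists_norm_dilatedIntegral_le (hv : Continuous v) (hS : 0 ≤ S) :
    ∃ C, ∀ φ : ℝ → ℝ, (∀ s, S ≤ s → φ s = 0) → ∀ K, (∀ s ∈ Icc 0 S, |φ s| ≤ K) →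
      ∀ t ∈ Icc (0 : ℝ) 1, ‖dilatedIntegral φ v t‖ ≤ C * K := by
  obtain ⟨M, hM⟩ := (isCompact_closedBall (0 : E) √S).exists_bound_of_continuousOn hv.continuousOn
  refine ⟨M * volume.real (closedBall (0 : E) √S), fun φ hφS K hK t ht => ?_⟩
  have hbound (y) (hy : y ∈ closedBall (0 : E) √S) : ‖φ (‖y‖ ^ 2) • v (t • y)‖ ≤ K * M := by
    rw [mem_closedBall_zero_iff] at hy
    have hφy : |φ (‖y‖ ^ 2)| ≤ K := hK _ ⟨by positivity, (Real.le_sqrt (norm_nonneg y) hS).1 hy⟩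
    have hvy : ‖v (t • y)‖ ≤ M := by
      refine hM _ (mem_closedBall_zero_iff.2 ?_)
      rw [norm_smul, Real.norm_of_nonneg ht.1]
      exact (mul_le_of_le_one_left (norm_nonneg y) ht.2).trans hy
    rw [norm_smul]
    exact mul_le_mul hφy hvy (norm_nonneg _) ((abs_nonneg _).trans hφy)
  have hzero (y) (hy : y ∉ closedBall (0 : E) √S) : φ (‖y‖ ^ 2) • v (t • y) = 0 := by
    rw [hφS _ (lt_norm_sq_of_notMem_closedBall_sqrt hy).le, zero_smul]
  rw [dilatedIntegral, ← setIntegral_eq_integral_of_forall_compl_eq_zero hzero]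
  exact (norm_setIntegral_le_of_norm_le_const measure_closedBall_lt_top hbound).trans_eq (by ring)

lemma exists_norm_dilatedIntegral_le_pow_div_factorial (hv : ContDiff ℝ 2 v) (hv0 : v 0 = 0)
    (hS : 0 ≤ S) (hΔ : ∀ x, ‖x‖ ^ 2 ≤ S → (Δ v) x = σ • v x) :
    ∃ C, ∀ (n : ℕ) (φ : ℝ → ℝ), Continuous φ → (∀ s, S ≤ s → φ s = 0) →
      ∀ K, (∀ s ∈ Icc 0 S, |φ s| ≤ K) → ∀ t ∈ Icc (0 : ℝ) 1,
        ‖dilatedIntegral φ v t‖ ≤ C * K * ((‖σ‖ * (S / 2) * t) ^ n / n.factorial) := by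
  obtain ⟨C, hC⟩ := exists_norm_dilatedIntegral_le hv.continuous hS
  refine ⟨C, fun n => ?_⟩
  induction n with
  | zero => simpa using fun φ _ => hC φ
  | succ n ih =>
    intro φ hφ hφS K hK
    set L := ‖σ‖ * (S / 2)
    have hderiv {t : ℝ} (ht : t ∈ Icc (0 : ℝ) 1) :=
      hasDerivAt_dilatedIntegral hφ hφS hv hΔ (abs_le.2 ⟨by linarith [ht.1], ht.2⟩)
    have hbound (t : ℝ) : HasDerivAt (fun t => C * K * ((L * t) ^ (n + 1) / (n + 1).factorial))
        (C * K * (L * ((L * t) ^ n / n.factorial))) t := by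
      refine ((((hasDerivAt_id t).const_mul L).pow (n + 1)).div_const _ |>.const_mul
        (C * K)).congr_deriv ?_
      simp only [Nat.factorial_succ, Nat.cast_mul, id, Nat.add_sub_cancel]
      field_simp
    refine image_norm_le_of_norm_deriv_right_le_deriv_boundary
      (fun t ht => (hderiv ht).continuousAt.continuousWithinAt)
      (fun t ht => (hderiv ⟨ht.1, ht.2.le⟩).hasDerivWithinAt) ?_ hbound fun t ht => ?_
    · simp [dilatedIntegral, hv0]
    · calc ‖t • σ • dilatedIntegral (halfTailIntegral S φ) v t‖
          ≤ ‖σ‖ * ‖dilatedIntegral (halfTailIntegral S φ) v t‖ := by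
            rw [norm_smul, norm_smul, Real.norm_of_nonneg ht.1]
            exact mul_le_of_le_one_left (by positivity) ht.2.le
        _ ≤ ‖σ‖ * (C * (S / 2 * K) * ((L * t) ^ n / n.factorial)) := by
            gcongr
            exact ih _ (contDiff_halfTailIntegral S hφ).continuous
              (fun _ => halfTailIntegral_eq_zero hφS) _ (fun _ => abs_halfTailIntegral_le hK) t
              ⟨ht.1, ht.2.le⟩
        _ = C * K * (L * ((L * t) ^ n / n.factorial)) := by ring

lemma integral_comp_norm_sq_smul_eq_zero (hv : ContDiff ℝ 2 v) (hv0 : v 0 = 0)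
    (hΔ : ∀ x, ‖x‖ ^ 2 ≤ S → (Δ v) x = σ • v x) (hS : 0 ≤ S) (hφ : Continuous φ)
    (hφS : ∀ s, S ≤ s → φ s = 0) : ∫ y, φ (‖y‖ ^ 2) • v y = 0 := by
  obtain ⟨C, hC⟩ := exists_norm_dilatedIntegral_le_pow_div_factorial hv hv0 hS hΔ
  obtain ⟨K, hK⟩ := isCompact_Icc.exists_bound_of_continuousOn (hφ.continuousOn (s := Icc 0 S))
  have hlim : Tendsto (fun n : ℕ => C * K * ((‖σ‖ * (S / 2) * 1) ^ n / n.factorial)) atTop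
      (𝓝 0) := by
    simpa using (FloorSemiring.tendsto_pow_div_factorial_atTop _).const_mul (C * K)
  have : ‖dilatedIntegral φ v 1‖ ≤ 0 :=
    ge_of_tendsto' hlim fun n => hC n φ hφ hφS K hK 1 ⟨zero_le_one, le_rfl⟩
  simpa [dilatedIntegral] using this

lemma integral_comp_norm_sq_smul_eq_zero_of_measurable (hv : ContDiff ℝ 2 v) (hv0 : v 0 = 0)
    (hΔ : ∀ x, ‖x‖ ^ 2 ≤ S → (Δ v) x = σ • v x) (hS : 0 ≤ S) {b : ℝ → ℝ} (hb : Measurable b)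
    (hbint : Integrable fun y : E => b (‖y‖ ^ 2)) {q : ℝ} (hqS : q < S)
    (hbq : ∀ s, q < s → b s = 0) : ∫ y, b (‖y‖ ^ 2) • v y = 0 := by
  have hbS (s) (hs : S ≤ s) : b s = 0 := hbq s (hqS.trans_le hs)
  have hK := isCompact_closedBall (0 : E) √S
  have hnotMem {y : E} (hy : y ∉ closedBall (0 : E) √S) : S ≤ ‖y‖ ^ 2 :=
    (lt_norm_sq_of_notMem_closedBall_sqrt hy).le
  obtain ⟨M, hM0, hM⟩ := (hK.image hv.continuous).isBounded.exists_pos_norm_le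
  have hbv : Integrable fun y : E => b (‖y‖ ^ 2) • v y := by
    refine (hbint.integrableOn.smul_continuousOn hv.continuous.continuousOn hK
      ).integrable_of_forall_notMem_eq_zero fun y hy => ?_
    rw [hbS _ (hnotMem hy), zero_smul]
  refine norm_le_zero_iff.1 (le_of_forall_pos_le_add fun ε hε => ?_)
  obtain ⟨φ, hφ, hφS, hφε⟩ :=
    exists_continuous_integral_comp_norm_sq_sub_le hb hbint hqS hbq (div_pos hε hM0)
  have hφc : HasCompactSupport fun y : E => φ (‖y‖ ^ 2) := hasCompactSupport_comp_norm_sq hφS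
  have hφint : Integrable fun y : E => φ (‖y‖ ^ 2) :=
    Continuous.integrable_of_hasCompactSupport (by fun_prop) hφc
  have hφv : Integrable fun y : E => φ (‖y‖ ^ 2) • v y :=
    Continuous.integrable_of_hasCompactSupport (by have := hv.continuous; fun_prop) hφc.smul_right
  calc ‖∫ y, b (‖y‖ ^ 2) • v y‖
      = ‖∫ y, b (‖y‖ ^ 2) • v y - φ (‖y‖ ^ 2) • v y‖ := by
        rw [integral_sub hbv hφv, integral_comp_norm_sq_smul_eq_zero hv hv0 hΔ hS hφ hφS, sub_zero]
    _ ≤ ∫ y : E, |b (‖y‖ ^ 2) - φ (‖y‖ ^ 2)| * M := by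
        refine norm_integral_le_of_norm_le ((hbint.sub hφint).abs.mul_const M)
          (.of_forall fun y => ?_)
        rw [← sub_smul, norm_smul, Real.norm_eq_abs]
        by_cases hy : y ∈ closedBall (0 : E) √S
        · gcongr
          exact hM _ (mem_image_of_mem v hy)
        · simp [hbS _ (hnotMem hy), hφS _ (hnotMem hy)]
    _ ≤ 0 + ε := by
        rw [integral_mul_const, zero_add]
        exact (le_div_iff₀ hM0).1 hφε

lemma setIntegral_comp_norm_sq_smul_eq_zero {r ρ : ℝ} (hv : ContDiff ℝ 2 v) (hv0 : v 0 = 0)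
    (hΔ : ∀ x ∈ closedBall 0 ρ, (Δ v) x = σ • v x) {b : ℝ → ℝ} (hb : Measurable b) (hr : 0 ≤ r)
    (hrρ : r < ρ) (hbint : IntegrableOn (fun y : E => b (‖y‖ ^ 2)) (closedBall 0 r)) :
    ∫ y in closedBall 0 r, b (‖y‖ ^ 2) • v y = 0 := by
  have hρ : 0 ≤ ρ := hr.trans hrρ.le
  have hindicator (y : E) : (Iic (r ^ 2)).indicator b (‖y‖ ^ 2) =
      (closedBall 0 r).indicator (fun y => b (‖y‖ ^ 2)) y := by
    have : ‖y‖ ^ 2 ∈ Iic (r ^ 2) ↔ y ∈ closedBall 0 r := by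
      rw [mem_closedBall_zero_iff, mem_Iic, sq_le_sq₀ (norm_nonneg y) hr]
    by_cases hy : y ∈ closedBall 0 r
    · rw [indicator_of_mem hy, indicator_of_mem (this.2 hy)]
    · rw [indicator_of_notMem hy, indicator_of_notMem (mt this.1 hy)]
  have hindicator_int : Integrable fun y : E => (Iic (r ^ 2)).indicator b (‖y‖ ^ 2) := by
    simpa only [hindicator] using hbint.integrable_indicator measurableSet_closedBall
  have := integral_comp_norm_sq_smul_eq_zero_of_measurable (S := ρ ^ 2) hv hv0
    (fun x hx => hΔ x (mem_closedBall_zero_iff.2 ((sq_le_sq₀ (norm_nonneg x) hρ).1 hx)))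
    (sq_nonneg ρ) (hb.indicator measurableSet_Iic) hindicator_int
    (pow_lt_pow_left₀ hrρ hr two_ne_zero) fun s hs => indicator_of_notMem (notMem_Iic.2 hs) b
  simpa only [hindicator, ← indicator_smul_left, integral_indicator measurableSet_closedBall]
    using this

lemma setIntegral_smul_eq_zero_of_laplacian_eq_smul {r T : ℝ}
    (hv : ContDiffOn ℝ 2 v (ball 0 T)) (hv0 : v 0 = 0)
    (hΔ : ∀ x ∈ ball 0 T, (Δ v) x = σ • v x) (hrT : r < T) {β : E → ℝ} (hβ : Measurable β)
    (hβint : IntegrableOn β (closedBall 0 r))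
    (hrot : ∀ U : E ≃ₗᵢ[ℝ] E, ∀ y ∈ closedBall 0 r, β (U y) = β y) :
    ∫ y in closedBall 0 r, β y • v y = 0 := by
  rcases lt_or_ge r 0 with hr | hr
  · simp [closedBall_eq_empty.2 hr]
  rcases subsingleton_or_nontrivial E with hE | hE
  · simp [Subsingleton.elim (α := E) _ 0, hv0]
  obtain ⟨ρ, hrρ, hρT⟩ := exists_between hrT
  obtain ⟨ρ', hρρ', hρT'⟩ := exists_between hρT
  obtain ⟨V, hV, hVv⟩ := exists_contDiff_eqOn_ball (n := 2) hρT' hv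
  have hVΔ (x) (hx : x ∈ ball 0 ρ') : (Δ V) x = σ • V x := by
    have := hVv.eventuallyEq_of_mem (isOpen_ball.mem_nhds hx)
    rw [(laplacian_congr_nhds this).eq_of_nhds, hVv hx, hΔ x (ball_subset_ball hρT'.le hx)]
  obtain ⟨b, hb, hβb⟩ := exists_measurable_eq_comp_norm_sq hβ hrot
  have hV0 : V 0 = 0 := (hVv (mem_ball_self ((hr.trans_lt hrρ).trans hρρ'))).trans hv0
  rw [← setIntegral_comp_norm_sq_smul_eq_zero hV hV0
    (fun x hx => hVΔ x (closedBall_subset_ball hρρ' hx)) hb hr hrρ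
    (hβint.congr_fun hβb measurableSet_closedBall)]
  refine setIntegral_congr_fun measurableSet_closedBall fun y hy => ?_
  rw [← hβb y hy, hVv (closedBall_subset_ball (hrρ.trans hρρ') hy)]

end

theorem eigenfunction_integral_eq_general {F : Type*} [NormedAddCommGroup F] [NormedSpace ℂ F]
    [CompleteSpace F] {r T : ℝ} {c : ℂ} {Ψ : E → F} (hΨ : ContDiffOn ℝ 2 Ψ (ball 0 T))
    (hΔ : ∀ x ∈ ball 0 T, (Δ Ψ) x = c ^ 2 • Ψ x) (hrT : r < T) {β : E → ℝ} (hβ : Measurable β)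
    (hβint : IntegrableOn β (closedBall 0 r))
    (hrot : ∀ U : E ≃ₗᵢ[ℝ] E, ∀ y ∈ closedBall 0 r, β (U y) = β y) {e : E} (he : ‖e‖ = 1) :
    ∫ y in closedBall 0 r, β y • Ψ y =
      (∫ y in closedBall 0 r, β y • planeWave c e y) • Ψ 0 := by
  set L : ℂ →L[ℝ] F := (ContinuousLinearMap.toSpanSingleton ℂ (Ψ 0)).restrictScalars ℝ
  set w : E → F := L ∘ planeWave c e
  have hw : ContDiff ℝ 2 w := L.contDiff.comp (contDiff_planeWave c e)
  have hw0 : (Ψ - w) 0 = 0 := by simp [w, L, planeWave]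
  have hwΔ (x : E) : (Δ w) x = c ^ 2 • w x := by
    rw [(contDiff_planeWave c e).contDiffAt.laplacian_CLM_comp_left, laplacian_planeWave]
    simp [w, L, he, mul_smul]
  have hsubΔ (x) (hx : x ∈ ball 0 T) : (Δ (Ψ - w)) x = c ^ 2 • (Ψ - w) x := by
    rw [(hΨ.contDiffAt (isOpen_ball.mem_nhds hx)).laplacian_sub hw.contDiffAt, hΔ x hx, hwΔ,
      Pi.sub_apply, smul_sub]
  have hint {f : E → F} (hf : ContinuousOn f (ball 0 T)) :
      IntegrableOn (fun y => β y • f y) (closedBall 0 r) :=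
    hβint.smul_continuousOn (hf.mono (closedBall_subset_ball hrT)) (isCompact_closedBall 0 r)
  have hsub := setIntegral_smul_eq_zero_of_laplacian_eq_smul (hΨ.sub hw.contDiffOn) hw0 hsubΔ hrT
    hβ hβint hrot
  simp only [smul_sub] at hsub
  rw [integral_sub (hint hΨ.continuousOn) (hint hw.continuous.continuousOn), sub_eq_zero] at hsub
  rw [hsub, ← integral_smul_const]
  simp only [w, L, Function.comp_apply, ContinuousLinearMap.coe_restrictScalars',
    ContinuousLinearMap.toSpanSingleton_apply, smul_assoc]

end Eigenfunction

/-- If `Ψ` is smooth on `B(0,2R₀)` with `ΔΨ = σΨ` there, `c² = σ`, and `β` is a bounded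
measurable non-negative rotationally invariant function on `B(0,2R₀)`, then for `0 < R < R₀`,
`∫_{|Y|≤2R} Ψ(Y) β(Y) dY = Ψ(0) ∫_{|Y|≤2R} e^{c Y₁} β(Y) dY`. -/
theorem eigenfunction_integral_eq (d : ℕ) (hd : 1 ≤ d) (R₀ : ℝ) (hR₀ : 0 < R₀)
    (σ : ℝ) (c : ℂ) (hc : c ^ 2 = (σ : ℂ))
    (Ψ : EuclideanSpace ℝ (Fin d) → ℂ)
    (hΨsmooth : ContDiffOn ℝ (⊤ : ℕ∞) Ψ (ball (0 : EuclideanSpace ℝ (Fin d)) (2 * R₀)))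
    (hΨeig : ∀ x ∈ ball (0 : EuclideanSpace ℝ (Fin d)) (2 * R₀), lap Ψ x = (σ : ℂ) * Ψ x)
    (β : EuclideanSpace ℝ (Fin d) → ℝ)
    (hβmeas : Measurable β)
    (hβnonneg : ∀ y ∈ ball (0 : EuclideanSpace ℝ (Fin d)) (2 * R₀), 0 ≤ β y)
    (hβbdd : ∃ C : ℝ, ∀ y ∈ ball (0 : EuclideanSpace ℝ (Fin d)) (2 * R₀), β y ≤ C)
    (hβrot : ∀ (Rot : EuclideanSpace ℝ (Fin d) ≃ₗᵢ[ℝ] EuclideanSpace ℝ (Fin d)),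
      ∀ y ∈ ball (0 : EuclideanSpace ℝ (Fin d)) (2 * R₀), β (Rot y) = β y)
    (R : ℝ) (hR : 0 < R) (hRR₀ : R < R₀) :
    ∫ Y in closedBall (0 : EuclideanSpace ℝ (Fin d)) (2 * R), Ψ Y * (β Y : ℂ) =
      Ψ 0 * ∫ Y in closedBall (0 : EuclideanSpace ℝ (Fin d)) (2 * R),
        Complex.exp (c * ((Y ⟨0, hd⟩ : ℝ) : ℂ)) * (β Y : ℂ) := by
  obtain ⟨C, hC⟩ := hβbdd
  have hsub : closedBall (0 : EuclideanSpace ℝ (Fin d)) (2 * R) ⊆ ball 0 (2 * R₀) :=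
    closedBall_subset_ball (by linarith)
  have hΨ : ContDiffOn ℝ 2 Ψ (ball 0 (2 * R₀)) := hΨsmooth.of_le (by norm_cast)
  have hΔ (x) (hx : x ∈ ball 0 (2 * R₀)) : Laplacian.laplacian Ψ x = c ^ 2 • Ψ x := by
    rw [← lap_eq_laplacian (hΨ.contDiffAt (isOpen_ball.mem_nhds hx)), hΨeig x hx, hc, smul_eq_mul]
  have hβint : IntegrableOn β (closedBall 0 (2 * R)) :=
    Measure.integrableOn_of_bounded (M := C) measure_closedBall_lt_top.ne
      hβmeas.aestronglyMeasurable <| ae_restrict_of_forall_mem measurableSet_closedBall fun y hy =>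
        (Real.norm_of_nonneg (hβnonneg y (hsub hy))).trans_le (hC y (hsub hy))
  simpa [planeWave, mul_comm, EuclideanSpace.inner_single_left] using
    eigenfunction_integral_eq_general hΨ hΔ (by linarith : 2 * R < 2 * R₀) hβmeas hβint
      (fun U y hy => hβrot U y (hsub hy)) (e := EuclideanSpace.single ⟨0, hd⟩ 1) (by simp)
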